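/- Let ε > 0 and Δ > 0, and let A be an adaptive selector whose query functions and thresholds satisfy the Monotonicity assumption and the Bounded realized sensitivity assumption with bound Δ. Then the subsampled mechanism Repeated-AT_{ln(2),A}^{S_p} is ε-DP for p = 1 − e^{−ε}. -/

import Mathlib

open scoped ENNReal

noncomputable section

/-- A mechanism `M` is `ε`-add-DP: for every dataset `D` and element `x`,
with `D ∪ {x}` and `D` as the neighboring pair, the probability of every outcome
set under `M (D ∪ {x})` is at most `e^ε` times that under `M D`. -/
def AddDP {X : Type*} {O : Type*} (M : Multiset X → PMF O) (ε : ℝ) : Prop :=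
  ∀ (D : Multiset X) (x : X) (S : Set O),
    (M (x ::ₘ D)).toOuterMeasure S ≤ ENNReal.ofReal (Real.exp ε) * (M D).toOuterMeasure S

/-- A mechanism `M` is (two-sided) `ε`-DP with respect to add-remove neighbors. -/
def PureDP {X : Type*} {O : Type*} (M : Multiset X → PMF O) (ε : ℝ) : Prop :=
  ∀ (D : Multiset X) (x : X) (S : Set O),
    (M (x ::ₘ D)).toOuterMeasure S ≤ ENNReal.ofReal (Real.exp ε) * (M D).toOuterMeasure S ∧
    (M D).toOuterMeasure S ≤ ENNReal.ofReal (Real.exp ε) * (M (x ::ₘ D)).toOuterMeasure S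

/-- Poisson subsampling of a list: each element is kept independently with probability `p`. -/
def subsampleList {X : Type*} (p : ℝ≥0∞) (hp : p ≤ 1) : List X → PMF (Multiset X)
  | [] => PMF.pure 0
  | x :: xs =>
      (PMF.bernoulli p.toNNReal (ENNReal.toNNReal_mono ENNReal.one_ne_top hp)).bind fun b =>
        (subsampleList p hp xs).bind fun s => PMF.pure (if b then x ::ₘ s else s)

/-- The Poisson subsampling operator `S_p` on a dataset (finite multiset): each element is
kept independently with probability `p`. -/
def subsample {X : Type*} (p : ℝ≥0∞) (hp : p ≤ 1) (D : Multiset X) : PMF (Multiset X) :=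
  subsampleList p hp D.toList

/-- The subsampled mechanism `M^{S_p}`, mapping `D ↦ M (S_p D)`. -/
def subsampledMech {X : Type*} {O : Type*} (M : Multiset X → PMF O) (p : ℝ) (hp : p ≤ 1)
    (D : Multiset X) : PMF O :=
  (subsample (ENNReal.ofReal p) (ENNReal.ofReal_le_one.mpr hp) D).bind M

/-- The `Repeated-AT` mechanism: starting from history `hist`, in each of the remaining `L`
rounds the adaptive selector `A` chooses, from the history, a query `h` on datasets and a
threshold `τ`; exponential noise `θ ~ Exp(lam)` is added to the query value and the round
outputs `⊤` (i.e. `true`) iff `h D + θ > τ`.  (Since `θ ~ Exp(lam)` is continuous,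
`Pr[h D + θ > τ] = exp (-(lam * max (τ - h D) 0))`, so the round is a Bernoulli draw with
that success probability.) -/
def repeatedAT {X : Type*} (lam : ℝ) (hlam : 0 ≤ lam)
    (A : List Bool → (Multiset X → ℝ) × ℝ) :
    ℕ → Multiset X → List Bool → PMF (List Bool)
  | 0, _, hist => PMF.pure hist
  | (L + 1), D, hist =>
      (PMF.bernoulli (Real.toNNReal (Real.exp (-(lam * max ((A hist).2 - (A hist).1 D) 0))))
        (by
          apply Real.toNNReal_le_one.mpr
          rw [← Real.exp_zero]
          exact Real.exp_le_exp.mpr (neg_nonpos.mpr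
            (mul_nonneg hlam (le_max_right _ _))))).bind
        (fun b => repeatedAT lam hlam A L D (hist ++ [b]))

/-- Monotonicity assumption: for every history, adding an element to the dataset does not
decrease the query value. -/
def ATMonotone {X : Type*} (A : List Bool → (Multiset X → ℝ) × ℝ) : Prop :=
  ∀ (h : List Bool) (x : X) (D : Multiset X), (A h).1 D ≤ (A h).1 (x ::ₘ D)

/-- Bounded realized sensitivity assumption: for every pair of add-remove neighboring
datasets and every output sequence, the query differences realized on the rounds that
output `⊤` sum to at most `Δ`. -/
def ATBoundedSens {X : Type*} (A : List Bool → (Multiset X → ℝ) × ℝ)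
    (Δ : ℝ) (L : ℕ) : Prop :=
  ∀ (D : Multiset X) (x : X) (out : Fin L → Bool),
    ∑ i : Fin L,
      (if out i then
        |(A ((List.ofFn out).take i.val)).1 (x ::ₘ D) -
          (A ((List.ofFn out).take i.val)).1 D|
      else 0) ≤ Δ


theorem bern_bind {O : Type*} (q : NNReal) (hq : q ≤ 1) (f : Bool → PMF O) (S : Set O) :
    ((PMF.bernoulli q hq).bind f).toOuterMeasure S =
      (q : ℝ≥0∞) * (f true).toOuterMeasure S + ((1 - q : NNReal) : ℝ≥0∞) * (f false).toOuterMeasure S := by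
  rw [PMF.toOuterMeasure_bind_apply, tsum_fintype, Fintype.sum_bool]
  simp [PMF.bernoulli_apply]

theorem at_add {X : Type*} (lam : ℝ) (hlam : 0 ≤ lam)
    (A : List Bool → (Multiset X → ℝ) × ℝ) (hmono : ATMonotone A)
    (D : Multiset X) (x : X) (S : Set (List Bool)) (L : ℕ) :
    ∀ (hist : List Bool) (B : ℝ),
    (∀ out : Fin L → Bool, ∑ i : Fin L,
      (if out i then
        |(A (hist ++ (List.ofFn out).take i.val)).1 (x ::ₘ D) -
          (A (hist ++ (List.ofFn out).take i.val)).1 D|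
      else 0) ≤ B) →
    (repeatedAT lam hlam A L (x ::ₘ D) hist).toOuterMeasure S ≤
      ENNReal.ofReal (Real.exp (lam * B)) * (repeatedAT lam hlam A L D hist).toOuterMeasure S := by
  induction L with
  | zero =>
    intro hist B hB
    have h0 : 0 ≤ B := by simpa using hB (fun _ => true)
    simp only [repeatedAT]
    refine le_mul_of_one_le_left zero_le ?_
    rw [ENNReal.one_le_ofReal]
    exact Real.one_le_exp (mul_nonneg hlam h0)
  | succ L ih =>
    intro hist B hB
    simp only [repeatedAT, bern_bind]
    have hm := hmono hist x D
    have hT := ih (hist ++ [true]) (B - ((A hist).1 (x ::ₘ D) - (A hist).1 D)) (by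
      intro out
      have := hB (Fin.cons true out)
      rw [Fin.sum_univ_succ] at this
      simp only [List.ofFn_cons, Fin.cons_zero, Fin.cons_succ, Fin.val_succ, Fin.val_zero,
        List.take_succ_cons, List.take_zero, List.append_nil, if_true,
        abs_of_nonneg (sub_nonneg.mpr hm)] at this
      simp only [List.append_assoc, List.singleton_append]
      linarith)
    have hF := ih (hist ++ [false]) B (by
      intro out
      have := hB (Fin.cons false out)
      rw [Fin.sum_univ_succ] at this
      simp only [List.ofFn_cons, Fin.cons_zero, Fin.cons_succ, Fin.val_succ, Fin.val_zero,
        List.take_succ_cons, List.take_zero, List.append_nil] at this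
      simp only [List.append_assoc, List.singleton_append]
      simpa using this)
    set h' := (A hist).1 (x ::ₘ D)
    set h := (A hist).1 D
    set τ := (A hist).2
    rw [mul_add]
    refine add_le_add ?_ ?_
    · have hq : ENNReal.ofReal (Real.exp (-(lam * max (τ - h') 0))) ≤
          ENNReal.ofReal (Real.exp (lam * (h' - h))) *
            ENNReal.ofReal (Real.exp (-(lam * max (τ - h) 0))) := by
        rw [← ENNReal.ofReal_mul (Real.exp_nonneg _), ← Real.exp_add]
        apply ENNReal.ofReal_le_ofReal
        apply Real.exp_le_exp.mpr
        have : max (τ - h) 0 ≤ (h' - h) + max (τ - h') 0 := by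
          apply max_le
          · linarith [le_max_left (τ - h') 0]
          · linarith [le_max_right (τ - h') 0]
        nlinarith [mul_le_mul_of_nonneg_left this hlam]
      refine (mul_le_mul' hq hT).trans (le_of_eq ?_)
      have e : lam * B = lam * (h' - h) + lam * (B - (h' - h)) := by ring
      rw [e, Real.exp_add, ENNReal.ofReal_mul (Real.exp_nonneg _)]
      simp only [ENNReal.ofReal]
      ring
    · rw [mul_left_comm]
      refine mul_le_mul' ?_ hF
      rw [ENNReal.coe_le_coe]
      apply tsub_le_tsub_left
      apply Real.toNNReal_le_toNNReal
      apply Real.exp_le_exp.mpr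
      apply neg_le_neg
      apply mul_le_mul_of_nonneg_left _ hlam
      apply max_le_max_right
      linarith

theorem subsampleList_perm {X : Type*} (p : ℝ≥0∞) (hp : p ≤ 1) {l₁ l₂ : List X}
    (h : l₁.Perm l₂) : subsampleList p hp l₁ = subsampleList p hp l₂ := by
  induction h with
  | nil => rfl
  | cons x _ ih => simp only [subsampleList, ih]
  | swap x y l =>
    simp only [subsampleList, PMF.bind_bind, PMF.pure_bind]
    rw [PMF.bind_comm]
    congr 1; funext b
    congr 1; funext c
    congr 1; funext s
    cases b <;> cases c <;> simp [Multiset.cons_swap]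
  | trans _ _ h1 h2 => exact h1.trans h2

/-- under monotonicity and bounded realized sensitivity (with bound `Δ`),
the subsampled mechanism `Repeated-AT_{ln 2, A}^{S_p}` is `ε`-DP for `p = 1 - e^{-ε}`. -/
theorem stmt9 {X : Type*} (ε Δ : ℝ) (hε : 0 < ε) (hΔ : 0 < Δ) (L : ℕ)
    (A : List Bool → (Multiset X → ℝ) × ℝ)
    (hmono : ATMonotone A) (hsens : ATBoundedSens A Δ L) :
    PureDP
      (subsampledMech
        (fun D => repeatedAT (Real.log 2 / Δ)
          (le_of_lt (div_pos (Real.log_pos one_lt_two) hΔ)) A L D [])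
        (1 - Real.exp (-ε)) (sub_le_self 1 (Real.exp_nonneg _))) ε := by
  intro D x S
  set M := (fun D => repeatedAT (Real.log 2 / Δ)
          (le_of_lt (div_pos (Real.log_pos one_lt_two) hΔ)) A L D []) with hM
  have hadd : ∀ T, (M (x ::ₘ T)).toOuterMeasure S ≤ 2 * (M T).toOuterMeasure S := by
    intro T
    have := at_add (Real.log 2 / Δ) (le_of_lt (div_pos (Real.log_pos one_lt_two) hΔ)) A hmono
      T x S L [] Δ (by simpa using hsens T x)
    rwa [div_mul_cancel₀ _ hΔ.ne', Real.exp_log two_pos, ENNReal.ofReal_ofNat] at this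
  set p : ℝ := 1 - Real.exp (-ε) with hp
  have hp1 : p ≤ 1 := sub_le_self 1 (Real.exp_nonneg _)
  have hp0 : 0 ≤ p := by
    have : Real.exp (-ε) ≤ 1 := Real.exp_le_one_iff.mpr (by linarith)
    linarith
  have hP := ENNReal.ofReal_le_one.mpr hp1
  set Q := subsample (ENNReal.ofReal p) hP D with hQ
  have e1 : subsampledMech M p hp1 D = Q.bind M := rfl
  have e2 : (subsampledMech M p hp1 (x ::ₘ D)).toOuterMeasure S =
      ENNReal.ofReal p * (Q.bind fun T => M (x ::ₘ T)).toOuterMeasure S +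
      ENNReal.ofReal (1 - p) * (Q.bind M).toOuterMeasure S := by
    have hperm : (x ::ₘ D).toList.Perm (x :: D.toList) := by
      rw [← Multiset.coe_eq_coe]; simp [← Multiset.cons_coe]
    rw [subsampledMech, subsample, subsampleList_perm _ _ hperm, subsampleList, PMF.bind_bind]
    refine (bern_bind _ (ENNReal.toNNReal_mono ENNReal.one_ne_top hP) _ S).trans ?_
    simp only [PMF.bind_bind, PMF.pure_bind, if_true, Bool.false_eq_true, if_false]
    congr 2
    rw [ENNReal.coe_sub, ENNReal.coe_one, ENNReal.coe_toNNReal ENNReal.ofReal_ne_top,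
      ENNReal.ofReal_sub _ hp0, ENNReal.ofReal_one]
  have e3 : (Q.bind fun T => M (x ::ₘ T)).toOuterMeasure S ≤ 2 * (Q.bind M).toOuterMeasure S := by
    simp only [PMF.toOuterMeasure_bind_apply]
    rw [← ENNReal.tsum_mul_left]
    refine ENNReal.tsum_le_tsum fun T => ?_
    rw [mul_left_comm]
    exact mul_le_mul' le_rfl (hadd T)
  change (subsampledMech M p hp1 (x ::ₘ D)).toOuterMeasure S ≤
      _ * (subsampledMech M p hp1 D).toOuterMeasure S ∧
    (subsampledMech M p hp1 D).toOuterMeasure S ≤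
      _ * (subsampledMech M p hp1 (x ::ₘ D)).toOuterMeasure S
  rw [e2, e1]
  have hee : Real.exp ε * Real.exp (-ε) = 1 := by rw [← Real.exp_add]; simp
  constructor
  · refine (add_le_add_left (mul_le_mul' le_rfl e3) _).trans ?_
    rw [← mul_assoc, ← add_mul]
    refine mul_le_mul' ?_ le_rfl
    rw [← ENNReal.ofReal_ofNat 2, ← ENNReal.ofReal_mul hp0, ← ENNReal.ofReal_add (by positivity)
      (by linarith)]
    apply ENNReal.ofReal_le_ofReal
    nlinarith [sq_nonneg (Real.exp ε - 1), Real.exp_pos ε, Real.exp_pos (-ε),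
      mul_nonneg (Real.exp_pos (-ε)).le (sq_nonneg (Real.exp ε - 1))]
  · rw [mul_add, ← mul_assoc _ (ENNReal.ofReal (1 - p)), ← ENNReal.ofReal_mul (Real.exp_nonneg _)]
    have : Real.exp ε * (1 - p) = 1 := by rw [hp]; linarith
    rw [this, ENNReal.ofReal_one, one_mul]
    exact le_add_self
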